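/- For every integer m ≥ 0, the map v ↦ v(X₁ − 1) is an injective K-module endomorphism of K[F₂] and it restricts to a K-module isomorphism from I^m (with I⁰ = K[F₂]) onto (K·1 ⊕ K[F₂](X₁ − 1)) ∩ I^{m+1}. -/

import Mathlib

noncomputable section

/-- The free group on two generators. -/
abbrev F2 : Type := FreeGroup (Fin 2)

/-- The first generator `X₀` of `F₂`. -/
def X0 : F2 := FreeGroup.of 0

/-- The second generator `X₁` of `F₂`. -/
def X1 : F2 := FreeGroup.of 1

/-- The unit `e^{2πi/N}` of `ℂ`. -/
def zetaN (N : ℕ) : ℂˣ :=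
  Units.mk0 (Complex.exp (2 * Real.pi * Complex.I / N)) (Complex.exp_ne_zero _)

/-- The group `μ_N` of `N`-th roots of unity in `ℂˣ`. -/
def muN (N : ℕ) : Subgroup ℂˣ := rootsOfUnity N ℂ

lemma zetaN_mem (N : ℕ) : zetaN N ∈ muN N := by
  rcases Nat.eq_zero_or_pos N with h | h
  · subst h; simp [muN, mem_rootsOfUnity]
  · rw [muN, mem_rootsOfUnity]
    have hcast : (N : ℂ) ≠ 0 := Nat.cast_ne_zero.mpr h.ne'
    have : (zetaN N : ℂ) ^ N = 1 := by
      rw [zetaN, Units.val_mk0, ← Complex.exp_nat_mul, mul_div_cancel₀ _ hcast]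
      exact Complex.exp_two_pi_mul_I
    exact Units.ext (by simpa using this)

/-- The morphism `π : F₂ → μ_N` determined by `π(X₀) = e^{2πi/N}` and `π(X₁) = 1`. -/
def piN (N : ℕ) : F2 →* (muN N) :=
  FreeGroup.lift (fun i => if i = 0 then ⟨zetaN N, zetaN_mem N⟩ else 1)

/-- The subgroup `H := ker π` of `F₂`. -/
def Hgrp (N : ℕ) : Subgroup F2 := (piN N).ker

/-- The two-sided ideal `I = ker(K[F₂] → K[μ_N])`, as a `K`-submodule of `K[F₂]`. -/
def Isub (K : Type*) [CommRing K] (N : ℕ) : Submodule K (MonoidAlgebra K F2) :=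
  (RingHom.ker (MonoidAlgebra.mapDomainRingHom K (piN N))).restrictScalars K

/-- Powers of the ideal `I`, with the convention `I⁰ = K[F₂]`. -/
def Ipow (K : Type*) [CommRing K] (N : ℕ) : ℕ → Submodule K (MonoidAlgebra K F2)
  | 0 => ⊤
  | (m + 1) => Isub K N * Ipow K N m

/-- The `K`-submodule `K[F₂](g − 1) = {v (g − 1) : v ∈ K[F₂]}` of `K[F₂]`. -/
def Rsub (K : Type*) [CommRing K] (g : F2) : Submodule K (MonoidAlgebra K F2) :=
  LinearMap.range (LinearMap.mulRight K (MonoidAlgebra.of K F2 g - 1))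

/-- The `K`-submodule `W = K·1 ⊕ K[F₂](X₁ − 1)` of `K[F₂]`. -/
def Wsub (K : Type*) [CommRing K] : Submodule K (MonoidAlgebra K F2) :=
  Submodule.span K {1} ⊔ Rsub K X1

/-- affine action -/
def foxAct (K : Type*) [CommRing K] : F2 →* Equiv.Perm (MonoidAlgebra K F2) :=
  FreeGroup.lift (fun i =>
    { toFun := fun x => MonoidAlgebra.of K F2 (FreeGroup.of i) * x + (if i = 1 then 1 else 0)
      invFun := fun x => MonoidAlgebra.of K F2 (FreeGroup.of i)⁻¹ * (x - (if i = 1 then 1 else 0))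
      left_inv := fun x => by
        dsimp only
        rw [add_sub_cancel_right, ← mul_assoc, ← map_mul, inv_mul_cancel, map_one, one_mul]
      right_inv := fun x => by
        dsimp only
        rw [← mul_assoc, ← map_mul, mul_inv_cancel, map_one, one_mul, sub_add_cancel] })

lemma foxAct_of (K : Type*) [CommRing K] (i : Fin 2) (x : MonoidAlgebra K F2) :
    foxAct K (FreeGroup.of i) x =
      MonoidAlgebra.of K F2 (FreeGroup.of i) * x + (if i = 1 then 1 else 0) := by
  simp only [foxAct, FreeGroup.lift_apply_of]
  rfl

lemma foxAct_sub (K : Type*) [CommRing K] (g : F2) : ∀ x y : MonoidAlgebra K F2,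
    foxAct K g x - foxAct K g y = MonoidAlgebra.of K F2 g * (x - y) := by
  induction g using FreeGroup.induction_on with
  | C1 => intro x y; simp only [map_one, Equiv.Perm.one_apply, one_mul]
  | of i => intro x y; rw [foxAct_of, foxAct_of, mul_sub]; abel
  | inv_of i h =>
    intro x y
    have h1 := h (foxAct K (FreeGroup.of i)⁻¹ x) (foxAct K (FreeGroup.of i)⁻¹ y)
    rw [← Equiv.Perm.mul_apply, ← Equiv.Perm.mul_apply, ← map_mul, mul_inv_cancel, map_one] at h1
    simp only [Equiv.Perm.one_apply] at h1
    rw [h1, ← mul_assoc, ← map_mul, inv_mul_cancel, map_one, one_mul]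
  | mul a b ha hb =>
    intro x y
    rw [map_mul, Equiv.Perm.mul_apply, Equiv.Perm.mul_apply, ha, hb, map_mul, mul_assoc]

lemma foxAct_mul_zero (K : Type*) [CommRing K] (g h : F2) :
    foxAct K (g * h) 0 = foxAct K g 0 + MonoidAlgebra.of K F2 g * foxAct K h 0 := by
  have := foxAct_sub K g (foxAct K h 0) 0
  rw [sub_zero] at this
  rw [map_mul, Equiv.Perm.mul_apply, ← this]; abel

/-- augmentation -/
def augm (K : Type*) [CommRing K] (G : Type*) [Monoid G] : MonoidAlgebra K G →ₐ[K] K :=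
  MonoidAlgebra.lift K K G 1

lemma exists_fox (K : Type*) [CommRing K] :
    ∃ D : MonoidAlgebra K F2 →ₗ[K] MonoidAlgebra K F2,
      ∀ g, D (MonoidAlgebra.of K F2 g) = foxAct K g 0 := by
  refine ⟨(MonoidAlgebra.basis F2 K).constr K (fun g => foxAct K g 0), fun g => ?_⟩
  have : MonoidAlgebra.of K F2 g = MonoidAlgebra.basis F2 K g := by simp
  rw [this, Module.Basis.constr_basis]

lemma fox_mul (K : Type*) [CommRing K] (D : MonoidAlgebra K F2 →ₗ[K] MonoidAlgebra K F2)
    (hD : ∀ g, D (MonoidAlgebra.of K F2 g) = foxAct K g 0) (a b : MonoidAlgebra K F2) :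
    D (a * b) = augm K F2 b • D a + a * D b := by
  induction a using MonoidAlgebra.induction_on with
  | of g =>
    induction b using MonoidAlgebra.induction_on with
    | of h =>
      rw [← map_mul, hD, hD, hD, foxAct_mul_zero]
      simp [augm]
    | add x y hx hy => simp only [mul_add, map_add, hx, hy, add_smul]; abel
    | smul r x hx => simp only [mul_smul_comm, map_smul, hx, smul_add, smul_assoc]
  | add x y hx hy => simp only [add_mul, map_add, hx, hy, smul_add]; abel
  | smul r x hx =>
    simp only [smul_mul_assoc, map_smul, hx, smul_add]
    rw [smul_comm]

lemma augm_Isub (K : Type*) [CommRing K] (N : ℕ) (b : MonoidAlgebra K F2) (hb : b ∈ Isub K N) :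
    augm K F2 b = 0 := by
  have h : MonoidAlgebra.mapDomainRingHom K (piN N) b = 0 := hb
  have key : ∀ b : MonoidAlgebra K F2,
      augm K F2 b = augm K (muN N) (MonoidAlgebra.mapDomainRingHom K (piN N) b) := by
    intro b
    induction b using MonoidAlgebra.induction_on with
    | of g => simp [augm]
    | add x y hx hy => simp only [map_add, hx, hy]
    | smul r x hx =>
      rw [map_smul, hx, ← map_smul]
      congr 1
      simp [MonoidAlgebra.mapDomain_smul]
  rw [key, h, map_zero]

lemma Ipow_succ (K : Type*) [CommRing K] (N : ℕ) (m : ℕ) :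
    Ipow K N (m + 1) = Ipow K N m * Isub K N := by
  induction m with
  | zero =>
    have h1 : Isub K N * ⊤ = Isub K N := by
      apply le_antisymm
      · rw [Submodule.mul_le]
        intro a ha b _
        have h : MonoidAlgebra.mapDomainRingHom K (piN N) a = 0 := ha
        change MonoidAlgebra.mapDomainRingHom K (piN N) (a * b) = 0
        rw [map_mul, h, zero_mul]
      · intro a ha
        simpa using Submodule.mul_mem_mul ha (Submodule.mem_top (x := (1 : MonoidAlgebra K F2)))
    have h2 : ⊤ * Isub K N = Isub K N := by
      apply le_antisymm
      · rw [Submodule.mul_le]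
        intro b _ a ha
        have h : MonoidAlgebra.mapDomainRingHom K (piN N) a = 0 := ha
        change MonoidAlgebra.mapDomainRingHom K (piN N) (b * a) = 0
        rw [map_mul, h, mul_zero]
      · intro a ha
        simpa using Submodule.mul_mem_mul (Submodule.mem_top (x := (1 : MonoidAlgebra K F2))) ha
    simp only [Ipow]
    rw [h1, h2]
  | succ m ih =>
    rw [show Ipow K N (m + 1 + 1) = Isub K N * Ipow K N (m + 1) from rfl]
    conv_lhs => rw [ih]
    rw [← mul_assoc]
    rfl

lemma X1_sub_mem (K : Type*) [CommRing K] (N : ℕ) :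
    MonoidAlgebra.of K F2 X1 - 1 ∈ Isub K N := by
  change MonoidAlgebra.mapDomainRingHom K (piN N) _ = 0
  rw [map_sub, map_one]
  have : piN N X1 = 1 := by simp [piN, X1]
  simp [this, MonoidAlgebra.one_def]

lemma Ipow_le (K : Type*) [CommRing K] (N : ℕ) (m : ℕ) : Ipow K N (m + 1) ≤ Ipow K N 1 := by
  rw [show Ipow K N 1 = Isub K N * ⊤ from rfl, show Ipow K N (m+1) = Isub K N * Ipow K N m from rfl]
  exact mul_le_mul_right le_top _

lemma Ipow_one_augm (K : Type*) [CommRing K] (N : ℕ) (b : MonoidAlgebra K F2)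
    (hb : b ∈ Ipow K N 1) : augm K F2 b = 0 := by
  have : Ipow K N 1 ≤ LinearMap.ker (augm K F2).toLinearMap := by
    rw [show Ipow K N 1 = Isub K N * ⊤ from rfl, Submodule.mul_le]
    intro a ha b _
    simp [augm_Isub K N a ha]
  exact this hb

lemma Ipow_mul_mem (K : Type*) [CommRing K] (N : ℕ) (m : ℕ) (a : MonoidAlgebra K F2)
    (ha : a ∈ Ipow K N m) (c : MonoidAlgebra K F2) : a * c ∈ Ipow K N m := by
  have h : Ipow K N m * ⊤ ≤ Ipow K N m := by
    clear ha
    induction m with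
    | zero => exact le_top
    | succ m ih =>
      rw [show Ipow K N (m + 1) = Isub K N * Ipow K N m from rfl, mul_assoc]
      exact mul_le_mul_right ih _
  exact h (Submodule.mul_mem_mul ha Submodule.mem_top)

/-- For every `m ≥ 0`, the map `v ↦ v (X₁ − 1)` is an injective `K`-module endomorphism of
`K[F₂]` restricting to a `K`-module isomorphism from `I^m` onto
`(K·1 ⊕ K[F₂](X₁ − 1)) ∩ I^{m+1}`. -/
theorem statement13 (K : Type*) [CommRing K] [Algebra ℚ K] (N : ℕ) (hN : 0 < N) (m : ℕ) :
    Function.Injective (LinearMap.mulRight K (MonoidAlgebra.of K F2 X1 - 1)) ∧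
    Submodule.map (LinearMap.mulRight K (MonoidAlgebra.of K F2 X1 - 1)) (Ipow K N m) =
      Wsub K ⊓ Ipow K N (m + 1) := by
  obtain ⟨D, hD⟩ := exists_fox K
  have hmul := fox_mul K D hD
  have hX : augm K F2 (MonoidAlgebra.of K F2 X1 - 1) = 0 := augm_Isub K N _ (X1_sub_mem K N)
  have hD1 : D (MonoidAlgebra.of K F2 X1 - 1) = 1 := by
    rw [map_sub, ← map_one (MonoidAlgebra.of K F2), hD, hD, X1, foxAct_of]
    simp [MonoidAlgebra.one_def]
  have hinv : ∀ v, D (v * (MonoidAlgebra.of K F2 X1 - 1)) = v := by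
    intro v
    rw [hmul, hX, hD1, zero_smul, zero_add, mul_one]
  refine ⟨fun v w h => ?_, le_antisymm ?_ ?_⟩
  · rw [← hinv v, ← hinv w]
    exact congrArg D h
  · rintro _ ⟨v, hv, rfl⟩
    refine ⟨Submodule.mem_sup_right ⟨v, rfl⟩, ?_⟩
    rw [SetLike.mem_coe, Ipow_succ]
    exact Submodule.mul_mem_mul hv (X1_sub_mem K N)
  · rintro w ⟨hw, hw2⟩
    obtain ⟨c, hc, _, ⟨v, rfl⟩, rfl⟩ := Submodule.mem_sup.mp hw
    obtain ⟨r, rfl⟩ := Submodule.mem_span_singleton.mp hc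
    have h0 := Ipow_one_augm K N _ (Ipow_le K N m hw2)
    rw [LinearMap.mulRight_apply, map_add, map_mul, hX, mul_zero, add_zero, map_smul, map_one,
      smul_eq_mul, mul_one] at h0
    subst h0
    rw [zero_smul, zero_add] at hw2 ⊢
    refine ⟨v, ?_, rfl⟩
    have hle : Ipow K N (m + 1) ≤ (Ipow K N m).comap D := by
      rw [Ipow_succ, Submodule.mul_le]
      intro a ha b hb
      rw [Submodule.mem_comap, hmul, augm_Isub K N b hb, zero_smul, zero_add]
      exact Ipow_mul_mem K N m a ha _
    have := hle hw2
    rw [Submodule.mem_comap, LinearMap.mulRight_apply, hinv] at this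
    exact this
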